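/- Let ρ > 0, μ > 0 and a < 0 < b be real numbers, and let p ∈ ℝ. Define λ = Proj_{[-1,1]}(-p/μ) and z = Proj_{[a,b]}( -(1/ρ)(p + μλ) ). Then z ∈ [a,b], λ is sign-compatible with z (λ = 1 if z > 0, λ = -1 if z < 0, λ ∈ [-1,1] if z = 0), and (p + ρz + μλ)(v - z) ≥ 0 for all v ∈ [a,b]. -/

import Mathlib

/-- Projection onto the interval `[α, β]`: `Proj α β q = max α (min q β)`. -/
def Proj (α β q : ℝ) : ℝ := max α (min q β)

/-- `lam` is sign-compatible with `z`, i.e. `lam ∈ ∂|·|(z)`. -/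
def SignCompat (lam z : ℝ) : Prop :=
  (0 < z → lam = 1) ∧ (z < 0 → lam = -1) ∧ (z = 0 → lam ∈ Set.Icc (-1 : ℝ) 1)

/-!
Write `r = -p/μ` and `q = -(1/ρ)(p + μλ)`, so that `q = (μ/ρ)(r - λ)`. Since `λ` is the projection
of `r` onto `[-1, 1]`, the residual `r - λ` is positive only where `λ = 1` and negative only where
`λ = -1`. Scaling by `μ/ρ > 0` and projecting onto an interval containing `0` create no new strict
signs, so `λ` stays sign-compatible with `z`. Finally `p + ρz + μλ = ρ(z - q)`, and the variational
inequality is the one that characterizes `z` as the projection of `q`.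
-/

section Projection

variable {α β c q v : ℝ}

theorem proj_mem_Icc (h : α ≤ β) (q : ℝ) : Proj α β q ∈ Set.Icc α β :=
  ⟨le_max_left _ _, max_le h (min_le_right _ _)⟩

theorem proj_eq_left_of_lt_proj (h : q < Proj α β q) : Proj α β q = α :=
  have hqα : q < α := (lt_max_iff.1 h).resolve_right (min_le_left q β).not_gt
  max_eq_left ((min_le_left q β).trans hqα.le)

theorem proj_eq_right_of_proj_lt (hαβ : α ≤ β) (h : Proj α β q < q) : Proj α β q = β := by
  have hβq : β < q := (min_lt_iff.1 (max_lt_iff.1 h).2).resolve_left (lt_irrefl q)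
  rw [Proj, min_eq_right hβq.le, max_eq_right hαβ]

theorem lt_of_lt_proj (hα : α ≤ c) (h : c < Proj α β q) : c < q :=
  (lt_min_iff.1 ((lt_max_iff.1 h).resolve_left hα.not_gt)).1

theorem lt_of_proj_lt (hβ : c ≤ β) (h : Proj α β q < c) : q < c :=
  (min_lt_iff.1 (max_lt_iff.1 h).2).resolve_right hβ.not_gt

theorem proj_sub_mul_sub_proj_nonneg (q : ℝ) (hv : v ∈ Set.Icc α β) :
    0 ≤ (Proj α β q - q) * (v - Proj α β q) := by
  rcases lt_trichotomy q (Proj α β q) with hlt | heq | hgt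
  · have hα : Proj α β q ≤ v := (proj_eq_left_of_lt_proj hlt).trans_le hv.1
    exact mul_nonneg (sub_nonneg.2 hlt.le) (sub_nonneg.2 hα)
  · rw [sub_eq_zero.2 heq.symm, zero_mul]
  · have hβ : v ≤ Proj α β q :=
      hv.2.trans_eq (proj_eq_right_of_proj_lt (hv.1.trans hv.2) hgt).symm
    exact mul_nonneg_of_nonpos_of_nonpos (sub_nonpos.2 hgt.le) (sub_nonpos.2 hβ)

end Projection

namespace SignCompat

variable {lam x y a b c : ℝ}

theorem mem_Icc (h : SignCompat lam x) : lam ∈ Set.Icc (-1 : ℝ) 1 := by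
  rcases lt_trichotomy x 0 with hneg | hzero | hpos
  · simp [h.2.1 hneg]
  · exact h.2.2 hzero
  · simp [h.1 hpos]

theorem of_imp (h : SignCompat lam x) (hpos : 0 < y → 0 < x) (hneg : y < 0 → x < 0) :
    SignCompat lam y :=
  ⟨fun hy ↦ h.1 (hpos hy), fun hy ↦ h.2.1 (hneg hy), fun _ ↦ h.mem_Icc⟩

theorem const_mul (h : SignCompat lam x) (hc : 0 < c) : SignCompat lam (c * x) :=
  h.of_imp (pos_of_mul_pos_right · hc.le) (neg_of_mul_neg_right · hc.le)

theorem proj (h : SignCompat lam x) (ha : a ≤ 0) (hb : 0 ≤ b) : SignCompat lam (Proj a b x) :=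
  h.of_imp (lt_of_lt_proj ha) (lt_of_proj_lt hb)

end SignCompat

theorem signCompat_proj_sub_proj (r : ℝ) :
    SignCompat (Proj (-1) 1 r) (r - Proj (-1) 1 r) :=
  ⟨fun h ↦ proj_eq_right_of_proj_lt (by norm_num) (sub_pos.1 h),
    fun h ↦ proj_eq_left_of_lt_proj (sub_neg.1 h),
    fun _ ↦ proj_mem_Icc (by norm_num) r⟩

theorem stmt_10 (ρ μ a b : ℝ) (hρ : 0 < ρ) (hμ : 0 < μ) (ha : a < 0) (hb : 0 < b) (p : ℝ) :
    (Proj a b (-(1/ρ) * (p + μ * Proj (-1) 1 (-p/μ))) ∈ Set.Icc a b) ∧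
    SignCompat (Proj (-1) 1 (-p/μ)) (Proj a b (-(1/ρ) * (p + μ * Proj (-1) 1 (-p/μ)))) ∧
    ∀ v ∈ Set.Icc a b,
      0 ≤ (p + ρ * Proj a b (-(1/ρ) * (p + μ * Proj (-1) 1 (-p/μ)))
             + μ * Proj (-1) 1 (-p/μ))
          * (v - Proj a b (-(1/ρ) * (p + μ * Proj (-1) 1 (-p/μ)))) := by
  have hlam := signCompat_proj_sub_proj (-p/μ)
  set lam := Proj (-1) 1 (-p/μ)
  set q := -(1/ρ) * (p + μ * lam) with hq
  have q_eq_residual : q = μ / ρ * (-p/μ - lam) := by rw [hq]; field_simp; ring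
  have gradient_eq : p + ρ * Proj a b q + μ * lam = ρ * (Proj a b q - q) := by
    rw [hq]; field_simp; ring
  refine ⟨proj_mem_Icc (ha.trans hb).le q, ?_, fun v hv ↦ ?_⟩
  · have hq_sign : SignCompat lam q := q_eq_residual ▸ hlam.const_mul (div_pos hμ hρ)
    exact hq_sign.proj ha.le hb.le
  · rw [gradient_eq, mul_assoc]
    exact mul_nonneg hρ.le (proj_sub_mul_sub_proj_nonneg q hv)
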